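/- arXiv:math/0405244 — 2 statements merged into one kernel-verified Lean document; each statement's English description precedes it below -/
import Mathlib

section
/- Let f : L × L → ℂ (with f extended H-periodically in its first variable, so that f(x−y, y) means f evaluated at the representative in L of x−y modulo H) and let g : L → ℂ. Then for every p ∈ L: Σ_{x∈L} ε·exp(−2πi p x)·( Σ_{y∈L} ε·f(x−y, y)·g(y) ) = (Φ_p ∗ (Fg))(p), where Φ_p : L → ℂ is defined by Φ_p(r) = Σ_{y∈L} ε·exp(−2πi r y)·( Σ_{u∈L} ε·exp(−2πi p u)·f(u, y) ). -/
open Complex Finset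

noncomputable section

/-- Balanced representative of `z : ZMod n` in `[-n/2, n/2)`. -/
def bval (n : ℕ) (z : ZMod n) : ℤ :=
  if 2 * (z.val : ℤ) < (n : ℤ) then (z.val : ℤ) else (z.val : ℤ) - (n : ℤ)

/-- The real lattice point `ε·z ∈ [-H/2, H/2)` of `L` corresponding to `x : ZMod (H^2)`;
subtraction in `ZMod (H^2)` realizes reduction modulo `H` on `L`. -/
def Lpt (H : ℕ) (x : ZMod (H ^ 2)) : ℝ := (bval (H ^ 2) x : ℝ) / H

/-- The infinitesimal Fourier transformation `(Fφ)(p) = Σ_{x∈L} ε·exp(-2πipx)·φ(x)`. -/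
def Ftr (H : ℕ) [NeZero H] (φ : ZMod (H ^ 2) → ℂ) (p : ZMod (H ^ 2)) : ℂ :=
  ∑ x : ZMod (H ^ 2),
    (1 / (H : ℂ)) * Complex.exp (-2 * (Real.pi : ℂ) * I * (Lpt H p : ℂ) * (Lpt H x : ℂ)) * φ x

/-- The convolution `(φ∗ψ)(p) = Σ_{q∈L} ε·φ(p-q)·ψ(q)`. -/
def conv (H : ℕ) [NeZero H] (φ ψ : ZMod (H ^ 2) → ℂ) (p : ZMod (H ^ 2)) : ℂ :=
  ∑ q : ZMod (H ^ 2), (1 / (H : ℂ)) * φ (p - q) * ψ q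

/-!
Identifying `L` with `ZMod (H ^ 2)`, the kernel `exp (-2πipx)` becomes a primitive additive character
evaluated at `-(p * x)`. Translating by `y` multiplies a Fourier transform at `p` by the character
value at `-(p * y)`, so the left-hand side is the transform at `p` of the pointwise product of
`y ↦ (F f(·, y))(p)` and `g`. By Fourier inversion the transform of a product is the convolution of
the transforms, and `Φ_p` is the transform of the first factor.
-/

section CharDFT

variable {R K : Type*} [Ring R] [Fintype R] [CommSemiring K]

/-- The Fourier transform of functions on a finite ring `R` with kernel `ψ (-(p * x))`, where every
point carries the mass `c`. The dual group is identified with `R` through `ψ`. -/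
def charDFT (ψ : AddChar R K) (c : K) (φ : R → K) (p : R) : K :=
  ∑ x, c * ψ (-(p * x)) * φ x

/-- The convolution of functions on a finite ring `R` in which every point carries the mass `c`. -/
def weightedConv (c : K) (φ χ : R → K) (p : R) : K :=
  ∑ q, c * φ (p - q) * χ q

lemma charDFT_comp_sub_right (ψ : AddChar R K) (c : K) (φ : R → K) (y p : R) :
    charDFT ψ c (fun x => φ (x - y)) p = ψ (-(p * y)) * charDFT ψ c φ p := by
  unfold charDFT
  rw [← Equiv.sum_comp (Equiv.addRight y), Finset.mul_sum]
  refine Finset.sum_congr rfl fun u _ => ?_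
  simp only [Equiv.coe_addRight, add_sub_cancel_right, mul_add, neg_add, AddChar.map_add_eq_mul]
  ring

lemma charDFT_sum_mul {ι : Type*} (s : Finset ι) (ψ : AddChar R K) (c : K) (φ : ι → R → K)
    (a : ι → K) (p : R) :
    charDFT ψ c (fun x => ∑ i ∈ s, φ i x * a i) p = ∑ i ∈ s, charDFT ψ c (φ i) p * a i := by
  simp only [charDFT, Finset.mul_sum, Finset.sum_mul, mul_assoc]
  exact Finset.sum_comm

lemma charDFT_sum_translate (ψ : AddChar R K) (c : K) (f : R → R → K) (g : R → K) (p : R) :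
    charDFT ψ c (fun x => ∑ y, c * f (x - y) y * g y) p =
      charDFT ψ c (fun y => charDFT ψ c (fun u => f u y) p * g y) p := by
  calc charDFT ψ c (fun x => ∑ y, c * f (x - y) y * g y) p
      = charDFT ψ c (fun x => ∑ y, f (x - y) y * (c * g y)) p := by
        simp only [mul_comm c, mul_assoc]
    _ = ∑ y, ψ (-(p * y)) * charDFT ψ c (fun u => f u y) p * (c * g y) := by
        rw [charDFT_sum_mul Finset.univ ψ c (fun y x => f (x - y) y)]
        exact Finset.sum_congr rfl fun y _ => by
          rw [charDFT_comp_sub_right ψ c (fun u => f u y)]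
    _ = charDFT ψ c (fun y => charDFT ψ c (fun u => f u y) p * g y) p :=
        Finset.sum_congr rfl fun y _ => by ring

end CharDFT

section Primitive

variable {R K : Type*} [CommRing R] [Fintype R] [CommRing K] [IsDomain K]
  {ψ : AddChar R K} {c : K}

lemma charDFT_inversion (hψ : ψ.IsPrimitive) (hc : c ^ 2 * Fintype.card R = 1)
    (φ : R → K) (y : R) : ∑ q, c * ψ (q * y) * charDFT ψ c φ q = φ y := by
  classical
  calc ∑ q, c * ψ (q * y) * charDFT ψ c φ q
      = ∑ q, ∑ z, c ^ 2 * φ z * ψ (q * (y - z)) := by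
        simp only [charDFT, Finset.mul_sum]
        refine Finset.sum_congr rfl fun q _ => Finset.sum_congr rfl fun z _ => ?_
        rw [mul_sub, sub_eq_add_neg, AddChar.map_add_eq_mul]
        ring
    _ = ∑ z, c ^ 2 * φ z * ∑ q, ψ (q * (y - z)) := by
        simp only [Finset.mul_sum]
        exact Finset.sum_comm
    _ = c ^ 2 * φ y * Fintype.card R := by
        simp [AddChar.sum_mulShift _ hψ, sub_eq_zero]
    _ = φ y := by rw [mul_right_comm, hc, one_mul]

lemma charDFT_mul (hψ : ψ.IsPrimitive) (hc : c ^ 2 * Fintype.card R = 1)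
    (φ χ : R → K) (p : R) :
    charDFT ψ c (fun x => φ x * χ x) p = weightedConv c (charDFT ψ c φ) (charDFT ψ c χ) p := by
  calc charDFT ψ c (fun x => φ x * χ x) p
      = ∑ x, c * ψ (-(p * x)) * φ x * ∑ q, c * ψ (q * x) * charDFT ψ c χ q := by
        simp only [charDFT_inversion hψ hc χ]
        simp only [charDFT, mul_assoc]
    _ = ∑ q, ∑ x, c * (c * ψ (-((p - q) * x)) * φ x) * charDFT ψ c χ q := by
        simp only [Finset.mul_sum]
        rw [Finset.sum_comm]
        refine Finset.sum_congr rfl fun q _ => Finset.sum_congr rfl fun x _ => ?_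
        rw [sub_mul, neg_sub', sub_neg_eq_add, AddChar.map_add_eq_mul]
        ring
    _ = weightedConv c (charDFT ψ c φ) (charDFT ψ c χ) p := by
        simp only [weightedConv, ← Finset.sum_mul, ← Finset.mul_sum, ← charDFT.eq_def]

theorem stmt0_general (hψ : ψ.IsPrimitive) (hc : c ^ 2 * Fintype.card R = 1)
    (f : R → R → K) (g : R → K) (p : R) :
    charDFT ψ c (fun x => ∑ y, c * f (x - y) y * g y) p =
      weightedConv c (charDFT ψ c fun y => charDFT ψ c (fun u => f u y) p) (charDFT ψ c g) p := by
  rw [charDFT_sum_translate, charDFT_mul hψ hc]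

end Primitive

section Lattice

lemma intCast_bval (n : ℕ) [NeZero n] (z : ZMod n) : (bval n z : ZMod n) = z := by
  unfold bval
  split_ifs <;> simp

variable (H : ℕ) [NeZero H]

lemma exp_Lpt_mul_Lpt (p x : ZMod (H ^ 2)) :
    Complex.exp (-2 * (Real.pi : ℂ) * I * (Lpt H p : ℂ) * (Lpt H x : ℂ)) =
      ZMod.stdAddChar (-(p * x)) := by
  have hH : (H : ℂ) ≠ 0 := NeZero.ne _
  have hpx : -(p * x) = ((-(bval (H ^ 2) p * bval (H ^ 2) x) : ℤ) : ZMod (H ^ 2)) := by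
    push_cast
    rw [intCast_bval, intCast_bval]
  rw [hpx, ZMod.stdAddChar_coe]
  congr 1
  unfold Lpt
  push_cast
  field_simp

lemma Ftr_eq_charDFT : Ftr H = charDFT ZMod.stdAddChar (1 / (H : ℂ)) := by
  funext φ p
  simp only [Ftr, charDFT, exp_Lpt_mul_Lpt]

lemma one_div_sq_mul_card_zmod_sq :
    (1 / (H : ℂ)) ^ 2 * Fintype.card (ZMod (H ^ 2)) = 1 := by
  have hH : (H : ℂ) ≠ 0 := NeZero.ne _
  rw [ZMod.card, Nat.cast_pow, ← mul_pow, one_div_mul_cancel hH, one_pow]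

end Lattice

/-- for `f : L × L → ℂ` (extended `H`-periodically in the first variable)
and `g : L → ℂ`, the Fourier transform in `x` of `Σ_y ε·f(x-y,y)·g(y)` at `p` equals
`(Φ_p ∗ (Fg))(p)` where `Φ_p(r) = Σ_y ε·exp(-2πiry)·(Σ_u ε·exp(-2πipu)·f(u,y))`. -/
theorem stmt0 (H : ℕ) [NeZero H] (hH : Even H)
    (f : ZMod (H ^ 2) → ZMod (H ^ 2) → ℂ) (g : ZMod (H ^ 2) → ℂ)
    (p : ZMod (H ^ 2)) :
    (∑ x : ZMod (H ^ 2),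
        (1 / (H : ℂ)) * Complex.exp (-2 * (Real.pi : ℂ) * I * (Lpt H p : ℂ) * (Lpt H x : ℂ)) *
          (∑ y : ZMod (H ^ 2), (1 / (H : ℂ)) * f (x - y) y * g y)) =
      conv H
        (fun r => ∑ y : ZMod (H ^ 2),
          (1 / (H : ℂ)) * Complex.exp (-2 * (Real.pi : ℂ) * I * (Lpt H r : ℂ) * (Lpt H y : ℂ)) *
            (∑ u : ZMod (H ^ 2),
              (1 / (H : ℂ)) * Complex.exp (-2 * (Real.pi : ℂ) * I * (Lpt H p : ℂ) * (Lpt H u : ℂ)) *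
                f u y))
        (Ftr H g) p := by
  simp only [exp_Lpt_mul_Lpt, Ftr_eq_charDFT]
  exact stmt0_general (ZMod.isPrimitive_stdAddChar _) (one_div_sq_mul_card_zmod_sq H) f g p
end
end

section
/- Let φ₂ : L → ℂ be φ₂(x) = exp(−πx²). Then for every p ∈ L: (Fφ₂)(p) = c(p)·exp(−πp²), where c(p) = Σ_{x∈L} ε·exp(−π(x + ip)²). -/
open Complex Finset

noncomputable section

theorem exp_neg_mul_add_I_mul_sq_mul_exp_neg_mul_sq (c x p : ℂ) :
    Complex.exp (-c * (x + I * p) ^ 2) * Complex.exp (-c * p ^ 2) =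
      Complex.exp (-2 * c * I * p * x) * Complex.exp (-c * x ^ 2) := by
  have completed_square :
      -c * (x + I * p) ^ 2 + -c * p ^ 2 = -2 * c * I * p * x + -c * x ^ 2 := by
    linear_combination -c * p ^ 2 * I_sq
  rw [← Complex.exp_add, ← Complex.exp_add, completed_square]

theorem sum_mul_exp_mul_exp_neg_mul_sq {ι : Type*} (s : Finset ι) (w x : ι → ℂ) (c p : ℂ) :
    ∑ i ∈ s, w i * Complex.exp (-2 * c * I * p * x i) * Complex.exp (-c * x i ^ 2) =
      (∑ i ∈ s, w i * Complex.exp (-c * (x i + I * p) ^ 2)) * Complex.exp (-c * p ^ 2) := by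
  simp_rw [Finset.sum_mul, mul_assoc (w _), exp_neg_mul_add_I_mul_sq_mul_exp_neg_mul_sq]

theorem stmt16_general (H : ℕ) [NeZero H] (p : ZMod (H ^ 2)) :
    Ftr H (fun x => Complex.exp (-(Real.pi : ℂ) * ((Lpt H x : ℝ) : ℂ) ^ 2)) p =
      (∑ x : ZMod (H ^ 2),
          (1 / (H : ℂ)) *
            Complex.exp (-(Real.pi : ℂ) * (((Lpt H x : ℝ) : ℂ) + I * ((Lpt H p : ℝ) : ℂ)) ^ 2)) *
        Complex.exp (-(Real.pi : ℂ) * ((Lpt H p : ℝ) : ℂ) ^ 2) :=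
  sum_mul_exp_mul_exp_neg_mul_sq univ (fun _ => 1 / (H : ℂ)) (fun x => (Lpt H x : ℂ)) Real.pi
    (Lpt H p)

/-- the infinitesimal Fourier transformation of `φ₂(x) = exp(−πx²)`
satisfies `(Fφ₂)(p) = c(p)·exp(−πp²)` with `c(p) = Σ_{x∈L} ε·exp(−π(x+ip)²)`. -/
theorem stmt16 (H : ℕ) [NeZero H] (hH : Even H) (p : ZMod (H ^ 2)) :
    Ftr H (fun x => Complex.exp (-(Real.pi : ℂ) * ((Lpt H x : ℝ) : ℂ) ^ 2)) p =
      (∑ x : ZMod (H ^ 2),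
          (1 / (H : ℂ)) *
            Complex.exp (-(Real.pi : ℂ) * (((Lpt H x : ℝ) : ℂ) + I * ((Lpt H p : ℝ) : ℂ)) ^ 2)) *
        Complex.exp (-(Real.pi : ℂ) * ((Lpt H p : ℝ) : ℂ) ^ 2) :=
  stmt16_general H p
end
end
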